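/- arXiv:2203.01789 — 2 statements merged into one kernel-verified Lean document; each statement's English description precedes it below -/
import Mathlib

section
/- Correctness of the logarithmic-depth CNOT-cascade scheme for a 4-qubit Pauli measurement: let C₁, C₂, C₃, C₄ be arbitrary 2×2 complex matrices and set σᵢ = Cᵢ† Z Cᵢ. Define on (ℂ²)^{⊗4} the operator W = CX_{2,4} · (CX ⊗ CX) · (C₁ ⊗ C₂ ⊗ C₃ ⊗ C₄), where CX is the 4×4 CNOT matrix (first factor control, second target) and CX_{2,4} = I₂ ⊗ ( |0⟩⟨0| ⊗ I₂ ⊗ I₂ + |1⟩⟨1| ⊗ I₂ ⊗ X ) is the CNOT with control on qubit 2 and target on qubit 4. Then W† (I₂ ⊗ I₂ ⊗ I₂ ⊗ Z) W = σ₁ ⊗ σ₂ ⊗ σ₃ ⊗ σ₄; i.e., conjugating the single-qubit Z measurement of the fourth qubit back through the cascade circuit yields the 4-qubit Pauli observable σ₁ ⊗ σ₂ ⊗ σ₃ ⊗ σ₄. -/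
open Matrix

noncomputable section

/-- Pauli `X`. -/
def Xg : Matrix (Fin 2) (Fin 2) ℂ := !![0, 1; 1, 0]

/-- Pauli `Z`. -/
def Zg : Matrix (Fin 2) (Fin 2) ℂ := !![1, 0; 0, -1]

/-- The index type of four qubits. -/
abbrev Q4 := Fin 2 × Fin 2 × Fin 2 × Fin 2

/-- Kronecker product of four 2×2 matrices, as a matrix on four qubits. -/
def kron4 (A B C D : Matrix (Fin 2) (Fin 2) ℂ) : Matrix Q4 Q4 ℂ :=
  fun x y => A x.1 y.1 * B x.2.1 y.2.1 * C x.2.2.1 y.2.2.1 * D x.2.2.2 y.2.2.2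

/-- The CNOT gate on `ℂ² ⊗ ℂ²` (first factor control, second target). -/
def CX : Matrix (Fin 2 × Fin 2) (Fin 2 × Fin 2) ℂ :=
  fun q p => if q.1 = p.1 ∧ q.2 = p.1 + p.2 then 1 else 0

/-- `CX ⊗ CX`: simultaneous CNOTs on qubits (1,2) and (3,4). -/
def CXCX : Matrix Q4 Q4 ℂ :=
  fun x y => CX (x.1, x.2.1) (y.1, y.2.1) * CX (x.2.2.1, x.2.2.2) (y.2.2.1, y.2.2.2)

/-- `CX_{2,4} = I₂ ⊗ (|0⟩⟨0| ⊗ I₂ ⊗ I₂ + |1⟩⟨1| ⊗ I₂ ⊗ X)`: CNOT with control on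
qubit 2 and target on qubit 4. -/
def CX24 : Matrix Q4 Q4 ℂ :=
  fun x y =>
    (1 : Matrix (Fin 2) (Fin 2) ℂ) x.1 y.1 *
      ((!![1, 0; 0, 0] : Matrix (Fin 2) (Fin 2) ℂ) x.2.1 y.2.1 *
          (1 : Matrix (Fin 2) (Fin 2) ℂ) x.2.2.1 y.2.2.1 *
          (1 : Matrix (Fin 2) (Fin 2) ℂ) x.2.2.2 y.2.2.2 +
        (!![0, 0; 0, 1] : Matrix (Fin 2) (Fin 2) ℂ) x.2.1 y.2.1 *
          (1 : Matrix (Fin 2) (Fin 2) ℂ) x.2.2.1 y.2.2.1 *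
          Xg x.2.2.2 y.2.2.2)

/-!
In the Heisenberg picture, a controlled-`U` gate turns an observable `M` of its target with
`U† M U = -M` into `Z ⊗ M`: the sign flips exactly when the control is `|1⟩`. Since `X Z X = -Z`,
the gate `CX_{2,4}` pulls `Z` on qubit 4 back to `I ⊗ Z ⊗ I ⊗ Z`, and then `CX ⊗ CX` pulls each
factor `I ⊗ Z` back to `Z ⊗ Z`. The gates `Cᵢ` act factorwise.
-/

open scoped Kronecker

section CommSemiring

variable {R l m n p : Type*} [CommSemiring R] [StarRing R] [Fintype l] [Fintype m]

theorem conjTranspose_kronecker_mul_kronecker_mul_kronecker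
    (A : Matrix l n R) (B : Matrix m p R) (M : Matrix l l R) (N : Matrix m m R) :
    (A ⊗ₖ B)ᴴ * (M ⊗ₖ N) * (A ⊗ₖ B) = (Aᴴ * M * A) ⊗ₖ (Bᴴ * N * B) := by
  rw [conjTranspose_kronecker, mul_kronecker_mul, mul_kronecker_mul]

/-- The gate `|0⟩⟨0| ⊗ I + |1⟩⟨1| ⊗ U`, which applies `U` to the second factor when the control
qubit, the first factor, is `|1⟩`; it covers `CX` and, up to an idle first qubit, `CX24`. -/
def controlled [DecidableEq m] (U : Matrix m m R) : Matrix (Fin 2 × m) (Fin 2 × m) R :=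
  single 0 0 1 ⊗ₖ 1 + single 1 1 1 ⊗ₖ U

theorem conjTranspose_controlled_mul_one_kronecker_mul [DecidableEq m] (U M : Matrix m m R) :
    (controlled U)ᴴ * (1 ⊗ₖ M) * controlled U =
      single 0 0 1 ⊗ₖ M + single 1 1 1 ⊗ₖ (Uᴴ * M * U) := by
  simp [controlled, conjTranspose_kronecker, add_mul, mul_add, ← mul_kronecker_mul]

end CommSemiring

theorem Zg_eq_single_sub_single : Zg = single 0 0 1 - single 1 1 1 := by
  ext i j
  fin_cases i <;> fin_cases j <;> simp [Zg]

theorem conjTranspose_Xg_mul_Zg_mul_Xg : Xgᴴ * Zg * Xg = -Zg := by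
  ext i j
  fin_cases i <;> fin_cases j <;> simp [Xg, Zg, mul_apply]

theorem conjTranspose_controlled_mul_one_kronecker_mul_of_eq_neg {m : Type*} [Fintype m]
    [DecidableEq m] {U M : Matrix m m ℂ} (hUM : Uᴴ * M * U = -M) :
    (controlled U)ᴴ * (1 ⊗ₖ M) * controlled U = Zg ⊗ₖ M := by
  rw [conjTranspose_controlled_mul_one_kronecker_mul, hUM, Zg_eq_single_sub_single]
  ext
  simp only [Matrix.add_apply, Matrix.sub_apply, Matrix.neg_apply, kroneckerMap_apply]
  ring

theorem CX_eq_controlled_Xg : CX = controlled Xg := by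
  ext ⟨a, b⟩ ⟨c, d⟩
  fin_cases a <;> fin_cases b <;> fin_cases c <;> fin_cases d <;> simp [CX, controlled, Xg]

theorem conjTranspose_CX_mul_one_kronecker_Zg_mul_CX : CXᴴ * (1 ⊗ₖ Zg) * CX = Zg ⊗ₖ Zg := by
  rw [CX_eq_controlled_Xg]
  exact conjTranspose_controlled_mul_one_kronecker_mul_of_eq_neg conjTranspose_Xg_mul_Zg_mul_Xg

theorem kron4_eq_kronecker (A B C D : Matrix (Fin 2) (Fin 2) ℂ) :
    kron4 A B C D = A ⊗ₖ (B ⊗ₖ (C ⊗ₖ D)) := by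
  ext
  simp only [kron4, kroneckerMap_apply, mul_assoc]

theorem kron4_eq_submatrix_kronecker (A B C D : Matrix (Fin 2) (Fin 2) ℂ) :
    kron4 A B C D = ((A ⊗ₖ B) ⊗ₖ (C ⊗ₖ D)).submatrix
      (Equiv.prodAssoc _ _ _).symm (Equiv.prodAssoc _ _ _).symm := by
  ext
  simp [kron4, mul_assoc]

theorem conjTranspose_kron4_mul_kron4_mul_kron4
    (C₁ C₂ C₃ C₄ M₁ M₂ M₃ M₄ : Matrix (Fin 2) (Fin 2) ℂ) :
    (kron4 C₁ C₂ C₃ C₄)ᴴ * kron4 M₁ M₂ M₃ M₄ * kron4 C₁ C₂ C₃ C₄ =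
      kron4 (C₁ᴴ * M₁ * C₁) (C₂ᴴ * M₂ * C₂) (C₃ᴴ * M₃ * C₃) (C₄ᴴ * M₄ * C₄) := by
  simp only [kron4_eq_kronecker, conjTranspose_kronecker_mul_kronecker_mul_kronecker]

theorem CXCX_eq_submatrix_kronecker :
    CXCX = (CX ⊗ₖ CX).submatrix (Equiv.prodAssoc _ _ _).symm (Equiv.prodAssoc _ _ _).symm :=
  rfl

theorem CX24_eq_one_kronecker_controlled : CX24 = 1 ⊗ₖ controlled (1 ⊗ₖ Xg) := by
  have single_zero : (!![1, 0; 0, 0] : Matrix (Fin 2) (Fin 2) ℂ) = single 0 0 1 := by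
    ext i j
    fin_cases i <;> fin_cases j <;> simp
  have single_one : (!![0, 0; 0, 1] : Matrix (Fin 2) (Fin 2) ℂ) = single 1 1 1 := by
    ext i j
    fin_cases i <;> fin_cases j <;> simp
  ext
  simp only [CX24, controlled, single_zero, single_one, ← one_kronecker_one, kroneckerMap_apply,
    Matrix.add_apply, mul_assoc]

theorem conjTranspose_CX24_mul_kron4_Zg_mul_CX24 :
    CX24ᴴ * kron4 1 1 1 Zg * CX24 = kron4 1 Zg 1 Zg := by
  have conj_target_eq_neg :
      (1 ⊗ₖ Xg)ᴴ * (1 ⊗ₖ Zg) * (1 ⊗ₖ Xg) = -((1 : Matrix (Fin 2) (Fin 2) ℂ) ⊗ₖ Zg) := by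
    rw [conjTranspose_kronecker_mul_kronecker_mul_kronecker, conjTranspose_Xg_mul_Zg_mul_Xg]
    ext
    simp
  rw [CX24_eq_one_kronecker_controlled, kron4_eq_kronecker, kron4_eq_kronecker,
    conjTranspose_kronecker_mul_kronecker_mul_kronecker,
    conjTranspose_controlled_mul_one_kronecker_mul_of_eq_neg conj_target_eq_neg]
  simp only [conjTranspose_one, one_mul]

theorem conjTranspose_CXCX_mul_kron4_Zg_Zg_mul_CXCX :
    CXCXᴴ * kron4 1 Zg 1 Zg * CXCX = kron4 Zg Zg Zg Zg := by
  simp only [CXCX_eq_submatrix_kronecker, kron4_eq_submatrix_kronecker, conjTranspose_submatrix,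
    submatrix_mul_equiv, conjTranspose_kronecker_mul_kronecker_mul_kronecker,
    conjTranspose_CX_mul_one_kronecker_Zg_mul_CX]

/-- Correctness of the logarithmic-depth CNOT-cascade scheme for a 4-qubit Pauli
measurement: with `W = CX_{2,4} · (CX ⊗ CX) · (C₁ ⊗ C₂ ⊗ C₃ ⊗ C₄)` and
`σᵢ = Cᵢ† Z Cᵢ`, conjugating the single-qubit `Z` measurement of the fourth qubit
back through the cascade yields `W† (I ⊗ I ⊗ I ⊗ Z) W = σ₁ ⊗ σ₂ ⊗ σ₃ ⊗ σ₄`. -/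
theorem cnot_cascade_pauli_measurement
    (C₁ C₂ C₃ C₄ : Matrix (Fin 2) (Fin 2) ℂ) :
    (CX24 * CXCX * kron4 C₁ C₂ C₃ C₄)ᴴ * kron4 1 1 1 Zg *
        (CX24 * CXCX * kron4 C₁ C₂ C₃ C₄) =
      kron4 (C₁ᴴ * Zg * C₁) (C₂ᴴ * Zg * C₂) (C₃ᴴ * Zg * C₃) (C₄ᴴ * Zg * C₄) := by
  set K := kron4 C₁ C₂ C₃ C₄
  calc (CX24 * CXCX * K)ᴴ * kron4 1 1 1 Zg * (CX24 * CXCX * K)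
      = Kᴴ * (CXCXᴴ * (CX24ᴴ * kron4 1 1 1 Zg * CX24) * CXCX) * K := by
        simp only [conjTranspose_mul, Matrix.mul_assoc]
    _ = Kᴴ * kron4 Zg Zg Zg Zg * K := by
        rw [conjTranspose_CX24_mul_kron4_Zg_mul_CX24, conjTranspose_CXCX_mul_kron4_Zg_Zg_mul_CXCX]
    _ = kron4 (C₁ᴴ * Zg * C₁) (C₂ᴴ * Zg * C₂) (C₃ᴴ * Zg * C₃) (C₄ᴴ * Zg * C₄) :=
        conjTranspose_kron4_mul_kron4_mul_kron4 ..

end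
end

section
/- Unbiasedness and boundedness of the importance-sampled hybrid-PBC estimator: let M ∈ ℕ, α : Fin M → ℝ with each αᵢ ≠ 0 and Σᵢ αᵢ = 1, and let pᵢ ∈ [0,1] for each i. Set L = ‖α‖₁ = Σᵢ |αᵢ|, πᵢ = |αᵢ|/L, and for i ∈ Fin M and y ∈ {0,1} define η(i,y) = 1/2 − (1/2)·sgn(αᵢ)·(−1)^y·L. Then the expectation of η under the distribution that samples i with probability πᵢ and then y with P(y=1) = pᵢ equals the target probability: Σᵢ πᵢ (pᵢ η(i,1) + (1−pᵢ) η(i,0)) = Σᵢ αᵢ pᵢ. Moreover every value of η lies in the interval [(1 − L)/2, (1 + L)/2]. -/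
/-!
Importance sampling replaces `∑ i, α i * f i` by the mean of `sgn (α i) * L * f i` when `i` is drawn
with probability `π i = |α i| / L`, because `|α i| * sgn (α i) = α i`. Averaging `η (i, y)` over `y`
leaves `1 / 2 + sgn (α i) * L * (p i - 1 / 2)`, so the mean of `η` is
`1 / 2 + ∑ i, α i * (p i - 1 / 2)`, and the trace condition `∑ i, α i = 1` cancels the constants.
The estimator deviates from `1 / 2` by `L / 2` times a factor in `[-1, 1]`.
-/

namespace HybridPBC

lemma abs_mul_realSign (x : ℝ) : |x| * Real.sign x = x := by
  rcases lt_trichotomy x 0 with neg | rfl | pos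
  · rw [Real.sign_of_neg neg, abs_of_neg neg, neg_mul_neg, mul_one]
  · simp
  · rw [Real.sign_of_pos pos, abs_of_pos pos, mul_one]

lemma abs_realSign_le_one (x : ℝ) : |Real.sign x| ≤ 1 := by
  rcases Real.sign_apply_eq x with h | h | h <;> simp [h]

variable {ι : Type*} [Fintype ι] (α : ι → ℝ)

/-- The `ℓ₁`-norm `L = ‖α‖₁` of the coefficients. It is written as a sum because the norm of `ι → ℝ`
in Mathlib is the supremum norm. -/
def l1Norm : ℝ := ∑ j, |α j|

/-- The probability `πᵢ = |αᵢ| / ‖α‖₁` with which importance sampling selects the index `i`.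
It is the junk value `0` when `α = 0`. -/
noncomputable def samplingProb (i : ι) : ℝ := |α i| / l1Norm α

/-- The value `η(i, y)` that the estimator returns when the `i`-th standard PBC is selected and
outputs `y`. The output is a natural number, of which only the parity matters. -/
noncomputable def estimator (i : ι) (y : ℕ) : ℝ :=
  1 / 2 - (1 / 2) * Real.sign (α i) * (-1 : ℝ) ^ y * l1Norm α

lemma l1Norm_nonneg : 0 ≤ l1Norm α :=
  Finset.sum_nonneg fun _ _ ↦ abs_nonneg _

lemma abs_apply_le_l1Norm (i : ι) : |α i| ≤ l1Norm α :=
  Finset.single_le_sum (f := fun j ↦ |α j|) (fun _ _ ↦ abs_nonneg _) (Finset.mem_univ i)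

lemma sum_le_l1Norm : ∑ i, α i ≤ l1Norm α :=
  Finset.sum_le_sum fun _ _ ↦ le_abs_self _

lemma samplingProb_mul_l1Norm (i : ι) : samplingProb α i * l1Norm α = |α i| :=
  div_mul_cancel_of_imp fun hL ↦
    le_antisymm (hL ▸ abs_apply_le_l1Norm α i) (abs_nonneg _)

variable {α} in
lemma sum_samplingProb (hL : l1Norm α ≠ 0) : ∑ i, samplingProb α i = 1 :=
  (Finset.sum_div _ _ _).symm.trans (div_self hL)

lemma sum_samplingProb_mul_sign_mul_l1Norm (f : ι → ℝ) :
    ∑ i, samplingProb α i * (Real.sign (α i) * l1Norm α * f i) = ∑ i, α i * f i := by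
  refine Finset.sum_congr rfl fun i _ ↦ ?_
  calc samplingProb α i * (Real.sign (α i) * l1Norm α * f i)
      = samplingProb α i * l1Norm α * Real.sign (α i) * f i := by ring
    _ = α i * f i := by rw [samplingProb_mul_l1Norm, abs_mul_realSign]

lemma bernoulli_mean_estimator (i : ι) (q : ℝ) :
    q * estimator α i 1 + (1 - q) * estimator α i 0 =
      1 / 2 + Real.sign (α i) * l1Norm α * (q - 1 / 2) := by
  unfold estimator
  ring

variable {α} in
theorem mean_estimator (hL : l1Norm α ≠ 0) (p : ι → ℝ) :
    ∑ i, samplingProb α i * (p i * estimator α i 1 + (1 - p i) * estimator α i 0) =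
      1 / 2 + ∑ i, α i * (p i - 1 / 2) := by
  simp only [bernoulli_mean_estimator, mul_add, Finset.sum_add_distrib]
  rw [← Finset.sum_mul, sum_samplingProb hL, one_mul, sum_samplingProb_mul_sign_mul_l1Norm]

variable {α} in
theorem mean_estimator_of_sum_eq_one (hα : ∑ i, α i = 1) (p : ι → ℝ) :
    ∑ i, samplingProb α i * (p i * estimator α i 1 + (1 - p i) * estimator α i 0) =
      ∑ i, α i * p i := by
  have l1Norm_pos : 0 < l1Norm α := zero_lt_one.trans_le (hα ▸ sum_le_l1Norm α)
  calc _ = 1 / 2 + ∑ i, α i * (p i - 1 / 2) := mean_estimator l1Norm_pos.ne' p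
    _ = 1 / 2 + (∑ i, α i * p i - (∑ i, α i) * (1 / 2)) := by
      simp only [mul_sub, Finset.sum_sub_distrib, Finset.sum_mul]
    _ = ∑ i, α i * p i := by rw [hα]; ring

lemma abs_estimator_sub_half_le (i : ι) (y : ℕ) :
    |estimator α i y - 1 / 2| ≤ l1Norm α / 2 := by
  have half_l1Norm_nonneg : 0 ≤ l1Norm α / 2 := div_nonneg (l1Norm_nonneg α) zero_le_two
  calc |estimator α i y - 1 / 2|
      = |Real.sign (α i) * (-1) ^ y * (l1Norm α / 2)| := by
        rw [← abs_neg, estimator]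
        ring_nf
    _ = |Real.sign (α i)| * (l1Norm α / 2) := by
        rw [abs_mul, abs_mul, abs_neg_one_pow, mul_one, abs_of_nonneg half_l1Norm_nonneg]
    _ ≤ l1Norm α / 2 := mul_le_of_le_one_left half_l1Norm_nonneg (abs_realSign_le_one _)

theorem estimator_mem_Icc (i : ι) (y : ℕ) :
    estimator α i y ∈ Set.Icc ((1 - l1Norm α) / 2) ((1 + l1Norm α) / 2) := by
  obtain ⟨lower, upper⟩ := abs_le.mp (abs_estimator_sub_half_le α i y)
  constructor <;> linarith

end HybridPBC

open HybridPBC in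
theorem importance_sampled_hybrid_pbc_estimator_general {ι : Type*} [Fintype ι] (α : ι → ℝ)
    (hsum : ∑ i, α i = 1) (p : ι → ℝ) :
    (∑ i, samplingProb α i * (p i * estimator α i 1 + (1 - p i) * estimator α i 0) =
      ∑ i, α i * p i) ∧
    ∀ (i : ι) (y : ℕ),
      estimator α i y ∈ Set.Icc ((1 - l1Norm α) / 2) ((1 + l1Norm α) / 2) :=
  ⟨mean_estimator_of_sum_eq_one hsum p, estimator_mem_Icc α⟩

/-- Unbiasedness and boundedness of the importance-sampled hybrid-PBC estimator: with
`L = ‖α‖₁`, `πᵢ = |αᵢ|/L` and `η(i,y) = 1/2 − (1/2)·sgn(αᵢ)·(−1)^y·L`, the expectation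
of `η` under the distribution sampling `i` with probability `πᵢ` and then `y` with
`P(y=1) = pᵢ` equals `Σᵢ αᵢ pᵢ`, and every value of `η` lies in
`[(1 − L)/2, (1 + L)/2]`. -/
theorem importance_sampled_hybrid_pbc_estimator
    (M : ℕ) (α : Fin M → ℝ) (hα : ∀ i, α i ≠ 0) (hsum : ∑ i, α i = 1)
    (p : Fin M → ℝ) (hp : ∀ i, p i ∈ Set.Icc (0 : ℝ) 1) :
    (∑ i, (|α i| / (∑ j, |α j|)) *
        (p i * (1 / 2 - (1 / 2) * Real.sign (α i) * ((-1 : ℝ)) ^ (1 : ℕ) * (∑ j, |α j|)) +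
          (1 - p i) *
            (1 / 2 - (1 / 2) * Real.sign (α i) * ((-1 : ℝ)) ^ (0 : ℕ) * (∑ j, |α j|)))) =
      ∑ i, α i * p i ∧
    ∀ i : Fin M, ∀ y : Fin 2,
      (1 / 2 - (1 / 2) * Real.sign (α i) * ((-1 : ℝ)) ^ (y : ℕ) * (∑ j, |α j|)) ∈
        Set.Icc ((1 - ∑ j, |α j|) / 2) ((1 + ∑ j, |α j|) / 2) := by
  obtain ⟨mean, mem_Icc⟩ := importance_sampled_hybrid_pbc_estimator_general α hsum p
  exact ⟨mean, fun i y ↦ mem_Icc i y⟩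
end
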